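/- Let n ∈ {2,3,...}, ϱ ≥ 1, and α ∈ [1/n, 1). Then there exists a function c_1 : (0,∞) × (0,∞) → ℝ such that: (1) for all t > 0 and all x > 3π/2, a_1(t,x) ≤ (α / (2 t^α ϱ)) (2x/π)^{2ϱ-1} [ E_α(t^α(1−(π/(2x))^{2ϱ})) − E_α(t^α(1−(3π/(2x))^{2ϱ})) + c_1(t,x) ]; and (2) for every β ∈ ℝ and every m > 0, t^{α(n-1)} c_1(t, m t^β) / E_α(t^α) → 0 as t → ∞. -/

import Mathlib

open Real MeasureTheory Filter Topology intervalIntegral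

/-- The two-parameter Mittag-Leffler function `E_{α,β}(z) = ∑ z^n / Γ(αn+β)`. -/
noncomputable def ML (a b z : ℝ) : ℝ :=
  ∑' n : ℕ, z ^ n / Real.Gamma (a * n + b)

/-- The coefficient `a_1(t,x)`. -/
noncomputable def aOne (α ϱ t x : ℝ) : ℝ :=
  -∫ ξ in (Real.pi / (2 * x))..(3 * Real.pi / (2 * x)),
      ML α 1 (t ^ α * (1 - ξ ^ (2 * ϱ))) * Real.cos (x * ξ)

/-!
On `[π/(2x), 3π/(2x)]` one has `-cos(xξ) ≤ 1`, so `a_1` is at most the integral of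
`E_α(t^α(1 - ξ^{2ϱ}))`. Since `α E_α' = E_{α,α}` and, for `α ≤ 1`, the coefficients of `E_{α,α}`
dominate all but finitely many of those of `E_α`, the integrand is at most `α E_α'` plus an error
`P(t^α)` of polynomial growth. The weight `(2xξ/π)^{2ϱ-1} ≥ 1` turns `α E_α'(t^α(1 - ξ^{2ϱ}))` into
an exact derivative. Finally `t^α P(t^α)` is negligible because `E_α` outgrows every power.
-/

lemma rpow_mul_exp_neg_le_Gamma {s M : ℝ} (hs : 1 ≤ s) (hM : 0 ≤ M) :
    M ^ (s - 1) * Real.exp (-M) ≤ Real.Gamma s := by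
  have hs_pos : 0 < s := by linarith
  have h_int := Real.GammaIntegral_convergent hs_pos
  have h_subset : Set.Ioi M ⊆ Set.Ioi 0 := Set.Ioi_subset_Ioi hM
  calc M ^ (s - 1) * Real.exp (-M)
      = ∫ x in Set.Ioi M, M ^ (s - 1) * Real.exp (-x) := by
        rw [MeasureTheory.integral_const_mul, integral_exp_neg_Ioi]
    _ ≤ ∫ x in Set.Ioi M, Real.exp (-x) * x ^ (s - 1) := by
        refine setIntegral_mono_on ((integrableOn_exp_neg_Ioi M).const_mul _)
          (h_int.mono_set h_subset) measurableSet_Ioi fun x hx => ?_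
        rw [mul_comm]
        gcongr
        exact (Set.mem_Ioi.1 hx).le
    _ ≤ ∫ x in Set.Ioi 0, Real.exp (-x) * x ^ (s - 1) := by
        refine setIntegral_mono_set h_int ?_ h_subset.eventuallyLE
        filter_upwards [ae_restrict_mem measurableSet_Ioi] with x hx
        have hx_pos : 0 < x := hx
        exact mul_nonneg (Real.exp_pos _).le (Real.rpow_nonneg hx_pos.le _)
    _ = Real.Gamma s := (Real.Gamma_eq_integral hs_pos).symm

section MittagLeffler

variable {a : ℝ}

lemma tendsto_mul_natCast_add_atTop (ha : 0 < a) (b : ℝ) :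
    Tendsto (fun k : ℕ => a * k + b) atTop atTop :=
  tendsto_atTop_add_const_right _ b (tendsto_natCast_atTop_atTop.const_mul_atTop ha)

lemma summable_ML (ha : 0 < a) (b z : ℝ) :
    Summable fun k : ℕ => z ^ k / Real.Gamma (a * k + b) := by
  -- `M` is chosen so that `|z ^ k / M ^ (a * k)| ≤ (1 / 2) ^ k`.
  obtain ⟨M, hM, hMa⟩ : ∃ M : ℝ, 0 < M ∧ M ^ a = 2 * (|z| + 1) :=
    ⟨(2 * (|z| + 1)) ^ a⁻¹, by positivity, Real.rpow_inv_rpow (by positivity) ha.ne'⟩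
  have h_geom : Summable fun k : ℕ => Real.exp M / M ^ (b - 1) * (1 / 2 : ℝ) ^ k :=
    summable_geometric_two.mul_left _
  refine h_geom.of_norm_bounded_eventually_nat ?_
  filter_upwards [(tendsto_mul_natCast_add_atTop ha b).eventually_ge_atTop 1] with k hk
  have hΓ : 0 < Real.Gamma (a * k + b) := Real.Gamma_pos_of_pos (by linarith)
  have hΓ_ge : (2 * (|z| + 1)) ^ k * M ^ (b - 1) * Real.exp (-M) ≤ Real.Gamma (a * k + b) := by
    have h := rpow_mul_exp_neg_le_Gamma hk hM.le
    rwa [add_sub_assoc, Real.rpow_add hM, Real.rpow_mul hM.le, hMa, Real.rpow_natCast] at h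
  rw [norm_div, norm_pow, Real.norm_eq_abs, Real.norm_of_nonneg hΓ.le, div_le_iff₀ hΓ]
  calc |z| ^ k ≤ (|z| + 1) ^ k := by gcongr; linarith
    _ = Real.exp M / M ^ (b - 1) * (1 / 2) ^ k *
          ((2 * (|z| + 1)) ^ k * M ^ (b - 1) * Real.exp (-M)) := by
        rw [Real.exp_neg, mul_pow, one_div, inv_pow]
        field_simp
    _ ≤ Real.exp M / M ^ (b - 1) * (1 / 2) ^ k * Real.Gamma (a * k + b) := by gcongr

lemma ML_term_nonneg (ha : 0 ≤ a) {b z : ℝ} (hb : 0 < b) (hz : 0 ≤ z) (k : ℕ) :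
    0 ≤ z ^ k / Real.Gamma (a * k + b) :=
  div_nonneg (pow_nonneg hz k) (Real.Gamma_pos_of_pos (by positivity)).le

lemma ML_nonneg (ha : 0 ≤ a) {b z : ℝ} (hb : 0 < b) (hz : 0 ≤ z) : 0 ≤ ML a b z :=
  tsum_nonneg (ML_term_nonneg ha hb hz)

lemma pow_div_Gamma_le_ML (ha : 0 < a) {b z : ℝ} (hb : 0 < b) (hz : 0 ≤ z) (k : ℕ) :
    z ^ k / Real.Gamma (a * k + b) ≤ ML a b z :=
  (summable_ML ha b z).le_tsum k fun j _ => ML_term_nonneg ha.le hb hz j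

lemma rpow_isLittleO_rpow_atTop {p q : ℝ} (hpq : p < q) :
    (fun z : ℝ => z ^ p) =o[atTop] fun z : ℝ => z ^ q := by
  refine Asymptotics.isLittleO_of_tendsto' ?_ ?_
  · filter_upwards [eventually_gt_atTop 0] with z hz h_zero
    exact absurd h_zero (Real.rpow_pos_of_pos hz q).ne'
  · refine (tendsto_rpow_neg_atTop (sub_pos.2 hpq)).congr' ?_
    filter_upwards [eventually_gt_atTop 0] with z hz
    rw [neg_sub, Real.rpow_sub hz]

lemma rpow_isLittleO_ML (ha : 0 < a) {b : ℝ} (hb : 0 < b) (p : ℝ) :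
    (fun z : ℝ => z ^ p) =o[atTop] ML a b := by
  obtain ⟨k, hk⟩ := exists_nat_gt p
  have h_pow : (fun z : ℝ => z ^ p) =o[atTop] fun z : ℝ => z ^ k := by
    simpa only [Real.rpow_natCast] using rpow_isLittleO_rpow_atTop hk
  refine h_pow.trans_isBigO (.of_bound (Real.Gamma (a * k + b)) ?_)
  filter_upwards [eventually_ge_atTop 0] with z hz
  have hΓ : 0 < Real.Gamma (a * k + b) := Real.Gamma_pos_of_pos (by positivity)
  rw [Real.norm_of_nonneg (pow_nonneg hz k), Real.norm_of_nonneg (ML_nonneg ha.le hb hz),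
    ← div_le_iff₀' hΓ]
  exact pow_div_Gamma_le_ML ha hb hz k

lemma hasDerivAt_ML_one (ha : 0 < a) (z : ℝ) : HasDerivAt (ML a 1) (ML a a z / a) z := by
  have h_coeff (k : ℕ) :
      Real.Gamma (a * (k + 1 : ℕ) + 1) = a * (k + 1) * Real.Gamma (a * k + a) := by
    rw [← mul_add_one, ← Real.Gamma_add_one (by positivity), Nat.cast_add_one]
  have h_term (k : ℕ) (y : ℝ) :
      HasDerivAt (fun y : ℝ => y ^ (k + 1) / Real.Gamma (a * (k + 1 : ℕ) + 1))
        (y ^ k / Real.Gamma (a * k + a) / a) y := by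
    convert! (hasDerivAt_pow (k + 1) y).div_const (Real.Gamma (a * (k + 1 : ℕ) + 1)) using 1
    rw [h_coeff, Nat.add_sub_cancel, Nat.cast_add_one]
    field_simp
  have h_bound (k : ℕ) (y : ℝ) (hy : y ∈ Metric.ball 0 (|z| + 1)) :
      ‖y ^ k / Real.Gamma (a * k + a) / a‖ ≤ (|z| + 1) ^ k / Real.Gamma (a * k + a) / a := by
    have hΓ : 0 < Real.Gamma (a * k + a) := Real.Gamma_pos_of_pos (by positivity)
    rw [norm_div, norm_div, norm_pow, Real.norm_of_nonneg hΓ.le, Real.norm_of_nonneg ha.le]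
    gcongr
    exact (mem_ball_zero_iff.1 hy).le
  have h_tail := hasDerivAt_tsum_of_isPreconnected (y := z)
    ((summable_ML ha a (|z| + 1)).div_const a)
    Metric.isOpen_ball (convex_ball (0 : ℝ) (|z| + 1)).isPreconnected (fun k y _ => h_term k y)
    h_bound (Metric.mem_ball_self (by positivity))
    ((summable_nat_add_iff 1).2 (summable_ML ha 1 0)) (by simp)
  rw [tsum_div_const] at h_tail
  refine (h_tail.const_add 1).congr_of_eventuallyEq (.of_forall fun y => ?_)
  simpa [ML] using (summable_ML ha 1 y).tsum_eq_zero_add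

lemma continuous_ML_one (ha : 0 < a) : Continuous (ML a 1) :=
  continuous_iff_continuousAt.2 fun z => (hasDerivAt_ML_one ha z).continuousAt

lemma eventually_one_div_Gamma_mul_add_le (ha : 0 < a) {b b' : ℝ} (hb : b ≤ b') :
    ∀ᶠ k : ℕ in atTop, 1 / Real.Gamma (a * k + b') ≤ 1 / Real.Gamma (a * k + b) := by
  filter_upwards [(tendsto_mul_natCast_add_atTop ha b).eventually_ge_atTop 2] with k hk
  refine one_div_le_one_div_of_le (Real.Gamma_pos_of_pos (by linarith)) ?_
  exact Real.Gamma_strictMonoOn_Ici.monotoneOn hk (hk.trans (by gcongr)) (by gcongr)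

lemma exists_ML_le_ML_add_max_one_pow (ha : 0 < a) {b b' : ℝ} (hb : b ≤ b') :
    ∃ C : ℝ, 0 ≤ C ∧ ∃ K : ℕ, ∀ z : ℝ, 0 ≤ z → ML a b' z ≤ ML a b z + C * max 1 z ^ K := by
  obtain ⟨K, hK⟩ := eventually_atTop.1 (eventually_one_div_Gamma_mul_add_le ha hb)
  set d : ℕ → ℝ := fun k => 1 / Real.Gamma (a * k + b) - 1 / Real.Gamma (a * k + b') with hd
  refine ⟨∑ k ∈ Finset.range K, |d k|, Finset.sum_nonneg fun _ _ => abs_nonneg _, K,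
    fun z hz => ?_⟩
  have h_diff : HasSum (fun k => z ^ k * d k) (ML a b z - ML a b' z) := by
    simpa only [hd, mul_sub, mul_one_div, ML] using
      (summable_ML ha b z).hasSum.sub (summable_ML ha b' z).hasSum
  have h_tail (k : ℕ) (hk : k ∉ Finset.range K) : 0 ≤ z ^ k * d k :=
    mul_nonneg (pow_nonneg hz k) (sub_nonneg.2 (hK k (by simpa using hk)))
  have h_head (k : ℕ) (hk : k ∈ Finset.range K) : -(|d k| * max 1 z ^ K) ≤ z ^ k * d k := by
    have h_pow : z ^ k ≤ max 1 z ^ K :=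
      (pow_le_pow_left₀ hz (le_max_right 1 z) k).trans
        (pow_le_pow_right₀ (le_max_left 1 z) (Finset.mem_range.1 hk).le)
    calc -(|d k| * max 1 z ^ K) ≤ -(|d k| * z ^ k) := by gcongr
      _ = z ^ k * -|d k| := by ring
      _ ≤ z ^ k * d k := by gcongr; exact neg_abs_le _
  have h_sum := (Finset.sum_le_sum h_head).trans (sum_le_hasSum _ h_tail h_diff)
  rw [Finset.sum_neg_distrib, ← Finset.sum_mul] at h_sum
  linarith

end MittagLeffler

lemma hasDerivAt_comp_mul_one_sub_rpow {F : ℝ → ℝ} {F' s q ξ : ℝ} (hξ : 0 < ξ)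
    (hF : HasDerivAt F F' (s * (1 - ξ ^ q))) :
    HasDerivAt (fun ξ => F (s * (1 - ξ ^ q))) (F' * (s * -(q * ξ ^ (q - 1)))) ξ :=
  hF.comp ξ (((Real.hasDerivAt_rpow_const (.inl hξ.ne')).const_sub 1).const_mul s)

lemma continuous_mul_one_sub_rpow (s : ℝ) {q : ℝ} (hq : 0 ≤ q) :
    Continuous fun ξ : ℝ => s * (1 - ξ ^ q) :=
  continuous_const.mul (continuous_const.sub (Real.continuous_rpow_const hq))

lemma mul_one_sub_rpow_mem_Icc {s q ξ : ℝ} (hs : 0 ≤ s) (hq : 0 ≤ q) (hξ : ξ ∈ Set.Icc (0 : ℝ) 1) :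
    s * (1 - ξ ^ q) ∈ Set.Icc 0 s := by
  have h_nonneg : 0 ≤ ξ ^ q := Real.rpow_nonneg hξ.1 q
  have h_le_one : ξ ^ q ≤ 1 := Real.rpow_le_one hξ.1 hξ.2 hq
  exact ⟨mul_nonneg hs (by linarith), mul_le_of_le_one_right hs (by linarith)⟩

lemma integral_comp_mul_one_sub_rpow_le {f F F' : ℝ → ℝ} {s q a b : ℝ} (hs : 0 < s) (hq : 1 ≤ q)
    (ha : 0 < a) (hab : a ≤ b) (hb : b ≤ 1) (hf : ContinuousOn f (Set.Icc 0 s))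
    (hF : ∀ z ∈ Set.Icc 0 s, HasDerivAt F (F' z) z) (hF' : ∀ z ∈ Set.Icc 0 s, 0 ≤ F' z)
    (hfF' : ∀ z ∈ Set.Icc 0 s, f z ≤ F' z) :
    ∫ ξ in a..b, f (s * (1 - ξ ^ q)) ≤
      a ^ (1 - q) / (q * s) * (F (s * (1 - a ^ q)) - F (s * (1 - b ^ q))) := by
  set A := a ^ (1 - q) / (q * s) with hA
  have h_mem {ξ : ℝ} (hξ : ξ ∈ Set.Icc a b) : s * (1 - ξ ^ q) ∈ Set.Icc 0 s :=
    mul_one_sub_rpow_mem_Icc hs.le (by linarith) ⟨ha.le.trans hξ.1, hξ.2.trans hb⟩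
  have h_deriv {ξ : ℝ} (hξ : ξ ∈ Set.Icc a b) :=
    (hasDerivAt_comp_mul_one_sub_rpow (ha.trans_le hξ.1) (hF _ (h_mem hξ))).const_mul (-A)
  have h_cont : ContinuousOn (fun ξ => f (s * (1 - ξ ^ q))) (Set.Icc a b) := by
    exact hf.comp (continuous_mul_one_sub_rpow s (by linarith)).continuousOn fun ξ hξ => h_mem hξ
  have h_le {ξ : ℝ} (hξ : ξ ∈ Set.Ioo a b) : f (s * (1 - ξ ^ q)) ≤
      -A * (F' (s * (1 - ξ ^ q)) * (s * -(q * ξ ^ (q - 1)))) := by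
    have hy := h_mem (Set.Ioo_subset_Icc_self hξ)
    have h_weight : 1 ≤ (ξ / a) ^ (q - 1) :=
      Real.one_le_rpow ((one_le_div ha).2 hξ.1.le) (by linarith)
    have h_weight_eq : A * (s * (q * ξ ^ (q - 1))) = (ξ / a) ^ (q - 1) := by
      rw [hA, Real.div_rpow (ha.le.trans hξ.1.le) ha.le, ← neg_sub q 1, Real.rpow_neg ha.le]
      field_simp
    calc f (s * (1 - ξ ^ q)) ≤ F' (s * (1 - ξ ^ q)) := hfF' _ hy
      _ ≤ F' (s * (1 - ξ ^ q)) * (ξ / a) ^ (q - 1) := le_mul_of_one_le_right (hF' _ hy) h_weight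
      _ = -A * (F' (s * (1 - ξ ^ q)) * (s * -(q * ξ ^ (q - 1)))) := by
        rw [← h_weight_eq]
        ring
  have h_ftc := integral_le_sub_of_hasDeriv_right_of_le hab
    (fun ξ hξ => (h_deriv hξ).continuousAt.continuousWithinAt)
    (fun ξ hξ => (h_deriv (Set.Ioo_subset_Icc_self hξ)).hasDerivWithinAt)
    h_cont.integrableOn_Icc (fun ξ hξ => h_le hξ)
  linarith

lemma integral_ML_one_comp_mul_one_sub_rpow_le {α s q a b P : ℝ} (hα : 0 < α) (hs : 0 < s)
    (hq : 1 ≤ q) (ha : 0 < a) (hab : a ≤ b) (hb : b ≤ 1) (hP_nonneg : 0 ≤ P)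
    (hP : ∀ z ∈ Set.Icc 0 s, ML α 1 z ≤ ML α α z + P) :
    ∫ ξ in a..b, ML α 1 (s * (1 - ξ ^ q)) ≤
      α * a ^ (1 - q) / (q * s) *
        (ML α 1 (s * (1 - a ^ q)) - ML α 1 (s * (1 - b ^ q)) + s * P / α) := by
  have h_deriv (z : ℝ) : HasDerivAt (fun z => α * ML α 1 z + P * z) (ML α α z + P) z := by
    convert! ((hasDerivAt_ML_one hα z).const_mul α).add ((hasDerivAt_id z).const_mul P) using 1
    field_simp
  have h_boundary : P * (s * (1 - a ^ q)) - P * (s * (1 - b ^ q)) ≤ s * P := by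
    have hq_nonneg : 0 ≤ q := by linarith
    have h_le := (mul_one_sub_rpow_mem_Icc hs.le hq_nonneg ⟨ha.le, hab.trans hb⟩).2
    have h_ge := (mul_one_sub_rpow_mem_Icc hs.le hq_nonneg ⟨ha.le.trans hab, hb⟩).1
    nlinarith
  calc ∫ ξ in a..b, ML α 1 (s * (1 - ξ ^ q))
      ≤ a ^ (1 - q) / (q * s) * (α * ML α 1 (s * (1 - a ^ q)) + P * (s * (1 - a ^ q)) -
          (α * ML α 1 (s * (1 - b ^ q)) + P * (s * (1 - b ^ q)))) :=
        integral_comp_mul_one_sub_rpow_le hs hq ha hab hb (continuous_ML_one hα).continuousOn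
          (fun z _ => h_deriv z)
          (fun z hz => add_nonneg (ML_nonneg hα.le hα hz.1) hP_nonneg) hP
    _ ≤ a ^ (1 - q) / (q * s) *
          (α * ML α 1 (s * (1 - a ^ q)) - α * ML α 1 (s * (1 - b ^ q)) + s * P) := by
        gcongr ?_ * ?_
        linarith
    _ = α * a ^ (1 - q) / (q * s) *
          (ML α 1 (s * (1 - a ^ q)) - ML α 1 (s * (1 - b ^ q)) + s * P / α) := by
        field_simp

section Coefficient

variable {α ϱ t x : ℝ}

lemma aOne_le_integral_ML (hα : 0 < α) (hϱ : 0 ≤ ϱ) (ht : 0 < t) (hx : 3 * π / 2 ≤ x) :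
    aOne α ϱ t x ≤
      ∫ ξ in (π / (2 * x))..(3 * π / (2 * x)), ML α 1 (t ^ α * (1 - ξ ^ (2 * ϱ))) := by
  have hx_pos : 0 < x := by linarith [Real.pi_pos]
  have h_cont : Continuous fun ξ : ℝ => ML α 1 (t ^ α * (1 - ξ ^ (2 * ϱ))) :=
    (continuous_ML_one hα).comp (continuous_mul_one_sub_rpow _ (by linarith))
  rw [aOne, ← intervalIntegral.integral_neg]
  refine intervalIntegral.integral_mono_on (by gcongr; linarith [Real.pi_pos])
    (Continuous.intervalIntegrable (by fun_prop) _ _) (h_cont.intervalIntegrable _ _)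
    fun ξ hξ => ?_
  have hξ_mem : ξ ∈ Set.Icc (0 : ℝ) 1 :=
    ⟨le_trans (by positivity) hξ.1, hξ.2.trans ((div_le_one (by positivity)).2 (by linarith))⟩
  have h_nonneg := ML_nonneg hα.le one_pos
    (mul_one_sub_rpow_mem_Icc (Real.rpow_nonneg ht.le α) (mul_nonneg two_pos.le hϱ) hξ_mem).1
  rw [← mul_neg]
  exact mul_le_of_le_one_right h_nonneg (neg_le.2 (Real.neg_one_le_cos (x * ξ)))

lemma aOne_le_of_ML_one_le {P : ℝ} (hα : 0 < α) (hϱ : 1 / 2 ≤ ϱ) (ht : 0 < t)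
    (hx : 3 * π / 2 ≤ x) (hP_nonneg : 0 ≤ P)
    (hP : ∀ z ∈ Set.Icc 0 (t ^ α), ML α 1 z ≤ ML α α z + P) :
    aOne α ϱ t x ≤
      (α / (2 * t ^ α * ϱ)) * (2 * x / π) ^ (2 * ϱ - 1) *
        (ML α 1 (t ^ α * (1 - (π / (2 * x)) ^ (2 * ϱ))) -
          ML α 1 (t ^ α * (1 - (3 * π / (2 * x)) ^ (2 * ϱ))) + t ^ α * P / α) := by
  have hx_pos : 0 < x := by linarith [Real.pi_pos]
  have h_left : 0 < π / (2 * x) := by positivity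
  have h_le : π / (2 * x) ≤ 3 * π / (2 * x) := by gcongr; linarith [Real.pi_pos]
  have h_right : 3 * π / (2 * x) ≤ 1 := (div_le_one (by positivity)).2 (by linarith)
  have h_const : α * (π / (2 * x)) ^ (1 - 2 * ϱ) / (2 * ϱ * t ^ α) =
      (α / (2 * t ^ α * ϱ)) * (2 * x / π) ^ (2 * ϱ - 1) := by
    rw [← inv_div π, Real.inv_rpow h_left.le, ← Real.rpow_neg h_left.le, neg_sub]
    ring
  rw [← h_const]
  exact (aOne_le_integral_ML hα (by linarith) ht hx).trans
    (integral_ML_one_comp_mul_one_sub_rpow_le hα (Real.rpow_pos_of_pos ht α) (by linarith)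
      h_left h_le h_right hP_nonneg hP)

end Coefficient

lemma tendsto_rpow_mul_pow_div_ML {α : ℝ} (hα : 0 < α) (C p : ℝ) (K : ℕ) :
    Tendsto (fun t : ℝ => t ^ p * (t ^ α * (C * max 1 (t ^ α) ^ K) / α) / ML α 1 (t ^ α))
      atTop (𝓝 0) := by
  have h_pow : Tendsto (fun t : ℝ => (t ^ α) ^ (p / α + 1 + K) / ML α 1 (t ^ α)) atTop (𝓝 0) :=
    (rpow_isLittleO_ML hα one_pos _).tendsto_div_nhds_zero.comp (tendsto_rpow_atTop hα)
  rw [← mul_zero (C / α)]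
  refine (h_pow.const_mul (C / α)).congr' ?_
  filter_upwards [eventually_ge_atTop 1] with t ht
  have hs : 1 ≤ t ^ α := Real.one_le_rpow ht hα.le
  have hs_pos : 0 < t ^ α := by linarith
  have hp : (t ^ α) ^ (p / α) = t ^ p := by
    rw [← Real.rpow_mul (by linarith), mul_div_cancel₀ p hα.ne']
  rw [max_eq_right hs, Real.rpow_add hs_pos, Real.rpow_add hs_pos, hp, Real.rpow_one,
    Real.rpow_natCast]
  ring

theorem stmt18_general {α ϱ : ℝ} (hα : 0 < α) (hα_le : α ≤ 1) (hϱ : 1 / 2 ≤ ϱ) :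
    ∃ c : ℝ → ℝ,
      (∀ t : ℝ, 0 < t → ∀ x : ℝ, 3 * π / 2 ≤ x →
        aOne α ϱ t x ≤
          (α / (2 * t ^ α * ϱ)) * (2 * x / π) ^ (2 * ϱ - 1) *
            (ML α 1 (t ^ α * (1 - (π / (2 * x)) ^ (2 * ϱ))) -
              ML α 1 (t ^ α * (1 - (3 * π / (2 * x)) ^ (2 * ϱ))) + c t)) ∧
      ∀ p : ℝ, Tendsto (fun t : ℝ => t ^ p * c t / ML α 1 (t ^ α)) atTop (𝓝 0) := by
  obtain ⟨C, hC, K, h_ML⟩ := exists_ML_le_ML_add_max_one_pow hα hα_le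
  refine ⟨fun t => t ^ α * (C * max 1 (t ^ α) ^ K) / α, fun t ht x hx => ?_,
    fun p => tendsto_rpow_mul_pow_div_ML hα C p K⟩
  refine aOne_le_of_ML_one_le hα hϱ ht hx (by positivity) fun z hz => (h_ML z hz.1).trans ?_
  gcongr
  exact hz.2

theorem stmt18 (n : ℕ) (hn : 2 ≤ n) (ϱ α : ℝ) (hϱ : 1 ≤ ϱ)
    (hα1 : 1 / (n : ℝ) ≤ α) (hα2 : α < 1) :
    ∃ c1 : ℝ → ℝ → ℝ,
      (∀ t : ℝ, 0 < t → ∀ x : ℝ, 3 * Real.pi / 2 < x →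
        aOne α ϱ t x ≤
          (α / (2 * t ^ α * ϱ)) * (2 * x / Real.pi) ^ (2 * ϱ - 1) *
            (ML α 1 (t ^ α * (1 - (Real.pi / (2 * x)) ^ (2 * ϱ))) -
              ML α 1 (t ^ α * (1 - (3 * Real.pi / (2 * x)) ^ (2 * ϱ))) + c1 t x)) ∧
      (∀ β : ℝ, ∀ m : ℝ, 0 < m →
        Tendsto (fun t : ℝ => t ^ (α * ((n : ℝ) - 1)) * c1 t (m * t ^ β) / ML α 1 (t ^ α))
          atTop (nhds 0)) := by
  obtain ⟨c, h_le, h_lim⟩ := stmt18_general (hα1.trans_lt' (by positivity)) hα2.le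
    (one_half_lt_one.le.trans hϱ)
  exact ⟨fun t _ => c t, fun t ht x hx => h_le t ht x hx.le, fun _ _ _ => h_lim _⟩
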